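/- Let 0 < c < c₀, where c₀ ∈ (1,∞) is the unique zero of ψ(t) = (t+1)ln(t+1) + (t−1)ln(t−1) − 2t in (1,∞), let M > 0, and let r : ℝ → (0,∞) satisfy r(x) ≤ c|x| + M for all x ∈ ℝ. Then every lower semicontinuous function f : ℝ → (−∞,∞] with f > −∞ everywhere which satisfies liminf_{|x|→∞} f(x)/ln|x| > −∞ and is (λ,r)-supermedian is constant. -/

import Mathlib

/-!
Enlarging `c` within `(1, c₀)`, we have `ψ(c) < 0` and `r(x) ≤ c |x|` for large `|x|`. The mean of
`|s| ^ δ` over `[1 - c, 1 + c]` is `1 + δ ψ(c) / (2c) + o(δ)`, hence less than `1` for some small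
`δ > 0`. Convexity in the radius and scaling then show that `w(s) = |s| ^ δ` has mean less than
`w(x)` over `[x - ρ, x + ρ]` whenever `0 < ρ ≤ c |x|`.

As `f` is bounded below by a multiple of `ln |x|` near infinity, `f + ε w` attains its minimum for
every `ε > 0`. It does so in a fixed compact set, because at a minimum point `z` outside of it, `f`
would dominate `f(z) + ε w(z) - ε w`, whose mean exceeds `f(z)`. Letting `ε → 0`, `f` itself attains
its minimum, and a supermedian function which attains its minimum is constant.
-/

open Filter MeasureTheory

/-- The interval mean `λ_{x,ρ}(f) = (1/(2ρ)) ∫_{x-ρ}^{x+ρ} f(s) ds` of an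
`EReal`-valued function `f` on `ℝ`, computed as the supremum of the means of the
truncations `min (f, n)`. -/
noncomputable def intervalMeanE (f : ℝ → EReal) (x ρ : ℝ) : EReal :=
  ⨆ n : ℕ, (((1 / (2 * ρ)) * ∫ s in (x - ρ)..(x + ρ),
      (f s ⊓ (n : EReal)).toReal : ℝ) : EReal)

/-- `ψ(t) = (t+1)ln(t+1) + (t-1)ln(t-1) - 2t`. -/
noncomputable def psi (t : ℝ) : ℝ :=
  (t + 1) * Real.log (t + 1) + (t - 1) * Real.log (t - 1) - 2 * t

open Set Topology

section LowerSemicontinuous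

variable {X : Type*} [TopologicalSpace X]

lemma exists_continuous_between_of_lt [CompletelyRegularSpace X] {f : X → EReal}
    (hf : LowerSemicontinuous f) {m : ℝ} (hm : ∀ x, (m : EReal) ≤ f x) {y : X}
    (hy : (m : EReal) < f y) :
    ∃ h : X → ℝ, Continuous h ∧ (∀ x, m ≤ h x) ∧ (∀ x, (h x : EReal) ≤ f x) ∧ m < h y := by
  obtain ⟨q, hmq, hqy⟩ := EReal.lt_iff_exists_real_btwn.1 hy
  replace hmq : m < q := EReal.coe_lt_coe_iff.1 hmq
  obtain ⟨φ, hφ, hφy, hφone⟩ := CompletelyRegularSpace.completely_regular y (f ⁻¹' Iic q)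
    (hf.isClosed_preimage q) (not_le.2 hqy)
  have hφ_le (x : X) : (φ x : ℝ) ≤ 1 := (φ x).2.2
  refine ⟨fun x ↦ m + (q - m) * (1 - φ x), by fun_prop, fun x ↦ ?_, fun x ↦ ?_, ?_⟩
  · exact le_add_of_nonneg_right (mul_nonneg (sub_pos.2 hmq).le (sub_nonneg.2 (hφ_le x)))
  · rcases le_or_gt (f x) q with hx | hx
    · simpa [hφone hx] using hm x
    · refine le_trans (EReal.coe_le_coe_iff.2 ?_) hx.le
      nlinarith [(φ x).2.1]
  · simpa [hφy] using hmq

lemma exists_forall_le_of_tendsto_top [Nonempty X] {Y : Type*} [LinearOrder Y] [OrderTop Y]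
    [TopologicalSpace Y] [OrderTopology Y] {g : X → Y}
    (hg : LowerSemicontinuous g) (htop : Tendsto g (cocompact X) (𝓝 ⊤)) :
    ∃ z, ∀ x, g z ≤ g x := by
  by_cases hconst : ∀ x, g x = ⊤
  · exact ⟨Classical.arbitrary X, fun x ↦ by simp only [hconst, le_refl]⟩
  push Not at hconst
  obtain ⟨x₀, hx₀⟩ := hconst
  obtain ⟨K, hK, hKg⟩ := mem_cocompact.1 (htop.eventually (lt_mem_nhds hx₀.lt_top))
  have hx₀K : x₀ ∈ K := by_contra fun h ↦ lt_irrefl _ (hKg h)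
  obtain ⟨z, -, hz⟩ := (hg.lowerSemicontinuousOn K).exists_isMinOn ⟨x₀, hx₀K⟩ hK
  exact ⟨z, fun x ↦ (em (x ∈ K)).elim (fun h ↦ hz h) fun h ↦ (hz hx₀K).trans (hKg h).le⟩

end LowerSemicontinuous

section EReal

lemma le_of_forall_pos_le_add_mul {a b : EReal} (w : ℝ)
    (h : ∀ ε : ℝ, 0 < ε → a ≤ b + ((ε * w : ℝ) : EReal)) : a ≤ b := by
  have hcoe : Tendsto (fun ε : ℝ ↦ ((ε * w : ℝ) : EReal)) (𝓝[>] 0) (𝓝 0) := by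
    have : Continuous fun ε : ℝ ↦ ((ε * w : ℝ) : EReal) :=
      continuous_coe_real_ereal.comp (by fun_prop)
    simpa using (this.tendsto 0).mono_left nhdsWithin_le_nhds
  have hlim : Tendsto (fun ε : ℝ ↦ b + ((ε * w : ℝ) : EReal)) (𝓝[>] 0) (𝓝 b) := by
    have hadd : ContinuousAt (fun p : EReal × EReal ↦ p.1 + p.2) (b, 0) :=
      EReal.continuousAt_add (.inr EReal.zero_ne_bot) (.inr EReal.zero_ne_top)
    have hpair := hadd.tendsto.comp (tendsto_const_nhds.prodMk_nhds hcoe)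
    rwa [add_zero] at hpair
  exact ge_of_tendsto hlim (eventually_mem_nhdsWithin.mono h)

lemma coe_le_toReal_inf_natCast {a : ℝ} {y : EReal} {n : ℕ} (hy : (a : EReal) ≤ y) (hn : a ≤ n) :
    a ≤ (y ⊓ (n : EReal)).toReal := by
  have hinf : (a : EReal) ≤ y ⊓ (n : EReal) := le_inf hy (by exact_mod_cast hn)
  have htop : y ⊓ (n : EReal) ≠ ⊤ :=
    ne_top_of_le_ne_top (EReal.natCast_ne_top n) inf_le_right
  simpa using EReal.toReal_le_toReal hinf (EReal.coe_ne_bot a) htop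

lemma toReal_inf_natCast_le (y : EReal) (n : ℕ) : (y ⊓ (n : EReal)).toReal ≤ n := by
  rcases eq_or_ne (y ⊓ (n : EReal)) ⊥ with hbot | hbot
  · simp only [hbot, EReal.toReal_bot, Nat.cast_nonneg]
  · exact (EReal.toReal_le_toReal inf_le_right hbot (EReal.natCast_ne_top n)).trans_eq
      (EReal.toReal_coe n)

end EReal

section IntervalAverage

lemma intervalAverage_sub_add (h : ℝ → ℝ) (x ρ : ℝ) :
    ⨍ s in (x - ρ)..(x + ρ), h s = (∫ s in (x - ρ)..(x + ρ), h s) / (2 * ρ) := by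
  rw [interval_average_eq_div]
  ring

lemma lt_intervalAverage {h : ℝ → ℝ} {a b m y : ℝ} (hab : a < b) (hh : ContinuousOn h (Icc a b))
    (hm : ∀ s ∈ Icc a b, m ≤ h s) (hy : y ∈ Icc a b) (hmy : m < h y) : m < ⨍ s in a..b, h s := by
  rw [interval_average_eq_div, lt_div_iff₀ (sub_pos.2 hab), mul_comm, ← smul_eq_mul,
    ← intervalIntegral.integral_const]
  exact intervalIntegral.integral_lt_integral_of_continuousOn_of_le_of_exists_lt hab
    continuousOn_const hh (fun s hs ↦ hm s (Ioc_subset_Icc_self hs)) ⟨y, hy, hmy⟩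

end IntervalAverage

lemma convexOn_shift_add_shift_sub_mul {φ : ℝ → ℝ} (hφ : ConvexOn ℝ (Ici 0) φ) {d : ℝ}
    (hd : 0 ≤ d) (a : ℝ) : ConvexOn ℝ (Ici d) fun t ↦ φ (t + d) + φ (t - d) - a * t := by
  have hadd : ConvexOn ℝ (Ici d) fun t ↦ φ (t + d) := (hφ.translate_left d).subset
    (fun t (ht : d ≤ t) ↦ by simp only [mem_preimage, mem_Ici]; linarith) (convex_Ici d)
  have hsub : ConvexOn ℝ (Ici d) fun t ↦ φ (t - d) := (hφ.translate_left (-d)).subset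
    (fun t (ht : d ≤ t) ↦ by simp only [mem_preimage, mem_Ici]; linarith) (convex_Ici d)
  have hlin : ConcaveOn ℝ (Ici d) fun t ↦ a * t := (LinearMap.mul ℝ ℝ a).concaveOn (convex_Ici d)
  exact (hadd.add hsub).sub hlin

section Psi

lemma convexOn_psi : ConvexOn ℝ (Ici 1) psi :=
  convexOn_shift_add_shift_sub_mul Real.convexOn_mul_log zero_le_one 2

lemma psi_one_neg : psi 1 < 0 := by
  have := Real.log_two_lt_d9
  norm_num [psi]
  linarith

lemma psi_neg_of_lt_root {c₀ t : ℝ} (hc₀ : psi c₀ = 0) (h1t : 1 < t) (ht : t < c₀) :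
    psi t < 0 := by
  by_contra! hψ
  have hmem : t ∈ openSegment ℝ 1 c₀ := by
    rw [openSegment_eq_Ioo (h1t.trans ht)]
    exact ⟨h1t, ht⟩
  have := convexOn_psi.lt_right_of_left_lt self_mem_Ici (h1t.trans ht).le hmem
    (psi_one_neg.trans_le hψ)
  linarith

end Psi

section PowDefect

/-- The defect `2(1+δ)t · (m - 1)`, where `m` is the mean of `|s| ^ δ` over `[1 - t, 1 + t]` and
`1 ≤ t`. It vanishes at `δ = 0`, and its `δ`-derivative there is `ψ(t)`. -/
noncomputable def powDefect (δ t : ℝ) : ℝ :=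
  (t + 1) ^ (1 + δ) + (t - 1) ^ (1 + δ) - 2 * (1 + δ) * t

lemma hasDerivAt_powDefect_zero {t : ℝ} (ht : 1 < t) :
    HasDerivAt (fun δ ↦ powDefect δ t) (psi t) 0 := by
  have hid : HasDerivAt (fun δ : ℝ ↦ 1 + δ) 1 0 := (hasDerivAt_id 0).const_add 1
  have hadd := hid.const_rpow (a := t + 1) (by linarith)
  have hsub := hid.const_rpow (a := t - 1) (by linarith)
  refine ((hadd.add hsub).sub ((hid.const_mul 2).mul_const t)).congr_deriv ?_
  simp only [add_zero, Real.rpow_one, psi]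
  ring

lemma eventually_powDefect_neg {t : ℝ} (ht : 1 < t) (hψ : psi t < 0) :
    ∀ᶠ δ in 𝓝[>] 0, powDefect δ t < 0 := by
  have hderiv := hasDerivAt_powDefect_zero ht
  have hsign := eventually_nhdsWithin_sign_eq_of_deriv_neg (hderiv.deriv.trans_lt hψ)
    (by simp only [powDefect, add_zero, Real.rpow_one]; ring)
  filter_upwards [nhdsWithin_le_nhds hsign, self_mem_nhdsWithin] with δ hδ hpos
  rwa [zero_sub, Left.sign_neg, sign_pos (mem_Ioi.1 hpos), sign_eq_neg_one_iff] at hδ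

lemma convexOn_powDefect {δ : ℝ} (hδ : 0 ≤ δ) : ConvexOn ℝ (Ici 1) (powDefect δ) :=
  convexOn_shift_add_shift_sub_mul (convexOn_rpow (by linarith)) zero_le_one (2 * (1 + δ))

variable {δ : ℝ}

lemma powDefect_one_neg (hδ : δ ∈ Ioo 0 1) : powDefect δ 1 < 0 := by
  have hbernoulli : (2 : ℝ) ^ δ < 1 + δ := by
    have := rpow_one_add_lt_one_add_mul_self (s := 1) (by norm_num) one_ne_zero hδ.1 hδ.2
    norm_num at this
    exact this
  have h0 : (0 : ℝ) ^ (1 + δ) = 0 := Real.zero_rpow (by linarith [hδ.1])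
  have h2 : (2 : ℝ) ^ (1 + δ) = 2 * 2 ^ δ := Real.rpow_one_add' (by norm_num) (by linarith [hδ.1])
  rw [powDefect, sub_self, one_add_one_eq_two, h0, h2]
  linarith

lemma powDefect_neg_of_le {c t : ℝ} (hδ : δ ∈ Ioo 0 1) (hc : powDefect δ c < 0) (h1t : 1 ≤ t)
    (htc : t ≤ c) : powDefect δ t < 0 :=
  ((convexOn_powDefect hδ.1.le).le_max_of_mem_Icc self_mem_Ici (h1t.trans htc)
    ⟨h1t, htc⟩).trans_lt (max_lt (powDefect_one_neg hδ) hc)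

end PowDefect

section PowerMean

variable {δ : ℝ}

lemma continuous_abs_rpow (hδ : 0 ≤ δ) : Continuous fun s : ℝ ↦ |s| ^ δ :=
  continuous_abs.rpow_const fun _ ↦ Or.inr hδ

lemma integral_abs_rpow_of_nonneg (hδ : -1 < δ) {b : ℝ} (hb : 0 ≤ b) :
    ∫ s in (0 : ℝ)..b, |s| ^ δ = b ^ (1 + δ) / (1 + δ) := by
  have habs : ∫ s in (0 : ℝ)..b, |s| ^ δ = ∫ s in (0 : ℝ)..b, s ^ δ :=
    intervalIntegral.integral_congr fun s hs ↦ by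
      rw [uIcc_of_le hb] at hs
      simp only [abs_of_nonneg hs.1]
  rw [habs, integral_rpow (Or.inl hδ), Real.zero_rpow (by linarith), sub_zero, add_comm δ]

lemma integral_abs_rpow_neg_zero (a : ℝ) :
    ∫ s in -a..0, |s| ^ δ = ∫ s in 0..a, |s| ^ δ := by
  simpa using (intervalIntegral.integral_comp_neg (a := 0) (b := a) fun s : ℝ ↦ |s| ^ δ).symm

lemma intervalAverage_abs_rpow_eq (hδ : 0 ≤ δ) {t : ℝ} (ht : 1 ≤ t) :
    ⨍ s in (1 - t)..(1 + t), |s| ^ δ = 1 + powDefect δ t / (2 * (1 + δ) * t) := by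
  have hint (a b : ℝ) : IntervalIntegrable (fun s : ℝ ↦ |s| ^ δ) volume a b :=
    (continuous_abs_rpow hδ).intervalIntegrable a b
  rw [intervalAverage_sub_add, ← intervalIntegral.integral_add_adjacent_intervals
      (hint (1 - t) 0) (hint 0 (1 + t)), ← neg_sub t 1, integral_abs_rpow_neg_zero,
    integral_abs_rpow_of_nonneg (by linarith) (by linarith),
    integral_abs_rpow_of_nonneg (by linarith) (by linarith), powDefect]
  field_simp
  ring_nf

-- For `t ≤ 1` the interval lies in `[0, ∞)`, where the concave `s ^ δ` is below its tangent at `1`.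
lemma intervalAverage_abs_rpow_lt_one_of_le_one (hδ : δ ∈ Ioo 0 1) {t : ℝ} (ht0 : 0 < t)
    (ht1 : t ≤ 1) : ⨍ s in (1 - t)..(1 + t), |s| ^ δ < 1 := by
  have htangent : ∀ s ∈ Ioc (1 - t) (1 + t), |s| ^ δ ≤ 1 + δ * (s - 1) := fun s hs ↦ by
    have hs0 : 0 ≤ s := by linarith [hs.1]
    rw [abs_of_nonneg hs0]
    simpa using rpow_one_add_le_one_add_mul_self (s := s - 1) (by linarith) hδ.1.le hδ.2.le
  have hstrict : |1 + t| ^ δ < 1 + δ * (1 + t - 1) := by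
    rw [abs_of_pos (by linarith), add_sub_cancel_left]
    exact rpow_one_add_lt_one_add_mul_self (by linarith) ht0.ne' hδ.1 hδ.2
  have hlt : ∫ s in (1 - t)..(1 + t), |s| ^ δ < ∫ s in (1 - t)..(1 + t), (1 + δ * (s - 1)) :=
    intervalIntegral.integral_lt_integral_of_continuousOn_of_le_of_exists_lt (by linarith)
      (continuous_abs_rpow hδ.1.le).continuousOn (by fun_prop) htangent
      ⟨1 + t, right_mem_Icc.2 (by linarith), hstrict⟩
  have hlin : ∫ s in (1 - t)..(1 + t), (1 + δ * (s - 1)) = 2 * t := by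
    rw [intervalIntegral.integral_add intervalIntegrable_const
        (Continuous.intervalIntegrable (by fun_prop) _ _), intervalIntegral.integral_const_mul,
      intervalIntegral.integral_comp_sub_right fun s ↦ s, integral_id,
      intervalIntegral.integral_const, smul_eq_mul]
    ring
  rwa [intervalAverage_sub_add, div_lt_one (by linarith), ← hlin]

lemma intervalAverage_abs_rpow_lt_one {c t : ℝ} (hδ : δ ∈ Ioo 0 1) (hc : powDefect δ c < 0)
    (ht0 : 0 < t) (htc : t ≤ c) : ⨍ s in (1 - t)..(1 + t), |s| ^ δ < 1 := by
  rcases le_total t 1 with ht1 | h1t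
  · exact intervalAverage_abs_rpow_lt_one_of_le_one hδ ht0 ht1
  · rw [intervalAverage_abs_rpow_eq hδ.1.le h1t, add_lt_iff_neg_left]
    have := hδ.1
    exact div_neg_of_neg_of_pos (powDefect_neg_of_le hδ hc h1t htc) (by positivity)

lemma intervalAverage_abs_rpow_rescale {x : ℝ} (hx : x ≠ 0) (ρ : ℝ) :
    ⨍ s in (x - ρ)..(x + ρ), |s| ^ δ =
      |x| ^ δ * ⨍ s in (1 - ρ / |x|)..(1 + ρ / |x|), |s| ^ δ := by
  have hsigned : ⨍ s in (x - ρ)..(x + ρ), |s| ^ δ =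
      |x| ^ δ * ⨍ s in (1 - ρ / x)..(1 + ρ / x), |s| ^ δ := by
    have hsub := intervalIntegral.mul_integral_comp_mul_left (a := 1 - ρ / x) (b := 1 + ρ / x)
      (f := fun s : ℝ ↦ |s| ^ δ) x
    rw [mul_sub, mul_add, mul_div_cancel₀ _ hx, mul_one] at hsub
    simp only [abs_mul, Real.mul_rpow (abs_nonneg _) (abs_nonneg _),
      intervalIntegral.integral_const_mul] at hsub
    rw [intervalAverage_sub_add, intervalAverage_sub_add, ← hsub]
    field_simp
  rcases abs_choice x with h | h
  · rw [hsigned, h]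
  · rw [hsigned, h, interval_average_symm, div_neg, sub_neg_eq_add, ← sub_eq_add_neg]

lemma intervalAverage_abs_rpow_lt {c x ρ : ℝ} (hδ : δ ∈ Ioo 0 1) (hc : powDefect δ c < 0)
    (hρ : 0 < ρ) (hρc : ρ ≤ c * |x|) : ⨍ s in (x - ρ)..(x + ρ), |s| ^ δ < |x| ^ δ := by
  have hx : x ≠ 0 := by
    rintro rfl
    rw [abs_zero, mul_zero] at hρc
    exact hρ.not_ge hρc
  have hx' : 0 < |x| := abs_pos.2 hx
  rw [intervalAverage_abs_rpow_rescale hx]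
  exact mul_lt_of_lt_one_right (Real.rpow_pos_of_pos hx' δ)
    (intervalAverage_abs_rpow_lt_one hδ hc (div_pos hρ hx') ((div_le_iff₀ hx').2 hρc))

lemma exists_intervalAverage_abs_rpow_lt {c₀ c : ℝ} (hc₀1 : 1 < c₀) (hc₀ : psi c₀ = 0)
    (hc : c < c₀) :
    ∃ δ : ℝ, 0 < δ ∧ ∀ x ρ : ℝ, 0 < ρ → ρ ≤ c * |x| →
      ⨍ s in (x - ρ)..(x + ρ), |s| ^ δ < |x| ^ δ := by
  obtain ⟨c', hmax, hc'⟩ := exists_between (max_lt hc hc₀1)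
  obtain ⟨hcc', h1c'⟩ := max_lt_iff.1 hmax
  obtain ⟨δ, hneg, hδ⟩ := ((eventually_powDefect_neg h1c' (psi_neg_of_lt_root hc₀ h1c' hc')).and
    (Ioo_mem_nhdsGT one_pos)).exists
  refine ⟨δ, hδ.1, fun x ρ hρ hρc ↦ intervalAverage_abs_rpow_lt hδ hneg hρ ?_⟩
  exact hρc.trans (by gcongr)

end PowerMean

section Supermedian

/-- The function `f` is `(λ, r)`-supermedian: its mean over `[x - r x, x + r x]` is at most `f x`
at every point `x`. -/
def IsSupermedian (r : ℝ → ℝ) (f : ℝ → EReal) : Prop :=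
  ∀ x, intervalMeanE f x (r x) ≤ f x

lemma coe_intervalAverage_le_intervalMeanE {f : ℝ → EReal} {h : ℝ → ℝ} {x ρ : ℝ}
    (hf : Measurable f) (hρ : 0 < ρ) (hh : ContinuousOn h (Icc (x - ρ) (x + ρ)))
    (hle : ∀ s ∈ Icc (x - ρ) (x + ρ), (h s : EReal) ≤ f s) :
    ((⨍ s in (x - ρ)..(x + ρ), h s : ℝ) : EReal) ≤ intervalMeanE f x ρ := by
  have hends : x - ρ ≤ x + ρ := by linarith
  obtain ⟨B, hB⟩ := isCompact_Icc.bddAbove_image hh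
  obtain ⟨n, hn⟩ := exists_nat_ge B
  have hlower : ∀ s ∈ Icc (x - ρ) (x + ρ), h s ≤ (f s ⊓ (n : EReal)).toReal := fun s hs ↦
    coe_le_toReal_inf_natCast (hle s hs) ((hB (mem_image_of_mem h hs)).trans hn)
  have hupper : ∀ s ∈ Icc (x - ρ) (x + ρ), (f s ⊓ (n : EReal)).toReal ≤ n :=
    fun s _ ↦ toReal_inf_natCast_le (f s) n
  have hint : IntegrableOn (fun s ↦ (f s ⊓ (n : EReal)).toReal) (Icc (x - ρ) (x + ρ)) :=
    integrable_of_le_of_le (hf.inf measurable_const).ereal_toReal.aestronglyMeasurable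
      (ae_restrict_of_forall_mem measurableSet_Icc hlower)
      (ae_restrict_of_forall_mem measurableSet_Icc hupper)
      (hh.integrableOn_compact isCompact_Icc) (integrable_const _)
  have hmono : ∫ s in (x - ρ)..(x + ρ), h s ≤
      ∫ s in (x - ρ)..(x + ρ), (f s ⊓ (n : EReal)).toReal :=
    intervalIntegral.integral_mono_on hends (hh.intervalIntegrable_of_Icc hends)
      ((intervalIntegrable_iff_integrableOn_Icc_of_le hends).2 hint) hlower
  refine le_trans ?_ (le_iSup _ n)
  rw [intervalAverage_sub_add, div_eq_inv_mul, ← one_div]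
  gcongr

namespace IsSupermedian

variable {r : ℝ → ℝ} {f : ℝ → EReal}

lemma intervalAverage_le (hf : IsSupermedian r f) (hmeas : Measurable f) {h : ℝ → ℝ} {z : ℝ}
    (hr : 0 < r z) (hh : Continuous h) (hle : ∀ s, (h s : EReal) ≤ f s) (hz : f z = h z) :
    ⨍ s in (z - r z)..(z + r z), h s ≤ h z := by
  rw [← EReal.coe_le_coe_iff, ← hz]
  exact (coe_intervalAverage_le_intervalMeanE hmeas hr hh.continuousOn fun s _ ↦ hle s).trans (hf z)

lemma eq_of_forall_le (hf : IsSupermedian r f) (hr : ∀ x, 0 < r x) (hlsc : LowerSemicontinuous f)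
    {m : ℝ} (hm : ∀ x, (m : EReal) ≤ f x) {x₀ : ℝ} (hx₀ : f x₀ = m) (x : ℝ) : f x = m := by
  have hclosed : IsClosed {x | f x = m} := by
    convert hlsc.isClosed_preimage m using 1
    ext x
    exact (hm x).ge_iff_eq'.symm
  have hopen : IsOpen {x | f x = m} := by
    refine Metric.isOpen_iff.2 fun z hz ↦ ⟨r z, hr z, fun y hy ↦ ?_⟩
    by_contra hne
    obtain ⟨h, hh, hmh, hhf, hhy⟩ := exists_continuous_between_of_lt hlsc hm
      ((hm y).lt_of_ne' hne)
    have hhz : h z = m := le_antisymm (EReal.coe_le_coe_iff.1 (hz ▸ hhf z)) (hmh z)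
    have hmean := hf.intervalAverage_le hlsc.measurable (hr z) hh hhf (hhz ▸ hz)
    have hlt : m < ⨍ s in (z - r z)..(z + r z), h s :=
      lt_intervalAverage (by linarith [hr z]) hh.continuousOn (fun s _ ↦ hmh s)
        (Real.closedBall_eq_Icc ▸ Metric.ball_subset_closedBall hy) hhy
    linarith
  exact (IsClopen.eq_univ ⟨hclosed, hopen⟩ ⟨x₀, hx₀⟩ ▸ mem_univ x :)

lemma le_intervalAverage_of_forall_add_le (hf : IsSupermedian r f) (hmeas : Measurable f)
    {w : ℝ → ℝ} (hw : Continuous w) {z : ℝ} (hr : 0 < r z) (hbot : f z ≠ ⊥) (htop : f z ≠ ⊤)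
    (hz : ∀ s, f z + (w z : EReal) ≤ f s + (w s : EReal)) :
    w z ≤ ⨍ s in (z - r z)..(z + r z), w s := by
  lift f z to ℝ using ⟨htop, hbot⟩ with a ha
  have hle (s : ℝ) : ((a + w z - w s : ℝ) : EReal) ≤ f s := by
    rw [EReal.coe_sub, EReal.coe_add]
    exact EReal.sub_le_of_le_add (hz s)
  have hmean := hf.intervalAverage_le hmeas hr (h := fun s ↦ a + w z - w s) (by fun_prop) hle
    (by rw [← ha, add_sub_cancel_right])
  rw [intervalAverage_sub_add, intervalIntegral.integral_sub
    (continuous_const.intervalIntegrable _ _) (hw.intervalIntegrable _ _),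
    intervalIntegral.integral_const, div_le_iff₀ (by positivity), smul_eq_mul] at hmean
  rw [intervalAverage_sub_add, le_div_iff₀ (by positivity)]
  linarith

lemma eq_top_or_exists_mem_forall_add_le (hf : IsSupermedian r f) (hlsc : LowerSemicontinuous f)
    (hr : ∀ x, 0 < r x) (hbot : ∀ x, f x ≠ ⊥) {K : Set ℝ} {w : ℝ → ℝ} (hw : Continuous w)
    (hmean : ∀ x ∉ K, ⨍ s in (x - r x)..(x + r x), w s < w x)
    (htop : Tendsto (fun x ↦ f x + (w x : EReal)) (cocompact ℝ) (𝓝 ⊤)) :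
    (∀ x, f x = ⊤) ∨ ∃ z ∈ K, ∀ x, f z + (w z : EReal) ≤ f x + (w x : EReal) := by
  have hadd : LowerSemicontinuous fun x ↦ f x + (w x : EReal) :=
    hlsc.add' (continuous_coe_real_ereal.comp hw).lowerSemicontinuous fun x ↦
      EReal.continuousAt_add (.inr (EReal.coe_ne_bot _)) (.inr (EReal.coe_ne_top _))
  obtain ⟨z, hz⟩ := exists_forall_le_of_tendsto_top hadd htop
  by_cases hzK : z ∈ K
  · exact .inr ⟨z, hzK, hz⟩
  · have hfz : f z = ⊤ := by_contra fun hfz ↦ (hmean z hzK).not_ge <|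
      hf.le_intervalAverage_of_forall_add_le hlsc.measurable hw (hr z) (hbot z) hfz hz
    refine .inl fun x ↦ by_contra fun hfx ↦ EReal.add_ne_top hfx (EReal.coe_ne_top (w x)) ?_
    rw [← top_le_iff, ← EReal.top_add_coe (w z), ← hfz]
    exact hz x

lemma exists_eq_const_of_lyapunov (hf : IsSupermedian r f) (hlsc : LowerSemicontinuous f)
    (hr : ∀ x, 0 < r x) (hbot : ∀ x, f x ≠ ⊥) {K : Set ℝ} (hK : IsCompact K) {w : ℝ → ℝ}
    (hw : Continuous w) (hw0 : ∀ x, 0 ≤ w x)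
    (hmean : ∀ x ∉ K, ⨍ s in (x - r x)..(x + r x), w s < w x)
    (htop : ∀ ε : ℝ, 0 < ε →
      Tendsto (fun x ↦ f x + ((ε * w x : ℝ) : EReal)) (cocompact ℝ) (𝓝 ⊤)) :
    ∃ C : EReal, ∀ x, f x = C := by
  by_cases hconst : ∀ x, f x = ⊤
  · exact ⟨⊤, hconst⟩
  have hmin (ε : ℝ) (hε : 0 < ε) :
      ∃ z ∈ K, ∀ x, f z + ((ε * w z : ℝ) : EReal) ≤ f x + ((ε * w x : ℝ) : EReal) := by
    refine (hf.eq_top_or_exists_mem_forall_add_le hlsc hr hbot (hw.const_mul ε) (fun x hx ↦ ?_)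
      (htop ε hε)).resolve_left hconst
    rw [intervalAverage_sub_add, intervalIntegral.integral_const_mul, mul_div_assoc,
      ← intervalAverage_sub_add]
    gcongr
    exact hmean x hx
  obtain ⟨z₁, hz₁, -⟩ := hmin 1 one_pos
  obtain ⟨x₀, -, hx₀⟩ := (hlsc.lowerSemicontinuousOn K).exists_isMinOn ⟨z₁, hz₁⟩ hK
  have hle (x : ℝ) : f x₀ ≤ f x := le_of_forall_pos_le_add_mul (w x) fun ε hε ↦ by
    obtain ⟨z, hzK, hz⟩ := hmin ε hε
    have hεw : (0 : EReal) ≤ ((ε * w z : ℝ) : EReal) :=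
      EReal.coe_nonneg.2 (mul_nonneg hε.le (hw0 z))
    exact (hx₀ hzK).trans ((le_add_of_nonneg_right hεw).trans (hz x))
  have hfin : f x₀ ≠ ⊤ := fun h ↦ hconst fun x ↦ top_le_iff.1 (h ▸ hle x)
  lift f x₀ to ℝ using ⟨hfin, hbot x₀⟩ with m hm
  exact ⟨m, hf.eq_of_forall_le hr hlsc hle hm.symm⟩

end IsSupermedian

end Supermedian

section Growth

variable {f : ℝ → EReal}

lemma exists_eventually_mul_log_le
    (hf : ⊥ < liminf (fun x : ℝ ↦ f x / ((Real.log |x| : ℝ) : EReal))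
      (comap (fun x : ℝ ↦ |x|) atTop)) :
    ∃ K : ℝ, ∀ᶠ x in cocompact ℝ, ((K * Real.log |x| : ℝ) : EReal) ≤ f x := by
  obtain ⟨K, -, hK⟩ := EReal.lt_iff_exists_real_btwn.1 hf
  have hlt := eventually_lt_of_lt_liminf hK
  have hcomap : comap (fun x : ℝ ↦ |x|) atTop = cocompact ℝ := by
    rw [cocompact_eq_atBot_atTop, comap_abs_atTop]
  rw [hcomap] at hlt
  refine ⟨K, ?_⟩
  filter_upwards [hlt, tendsto_norm_cocompact_atTop.eventually_gt_atTop 1] with x hx h1x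
  have hlog : 0 < Real.log |x| := Real.log_pos h1x
  rw [EReal.coe_mul, ← EReal.le_div_iff_mul_le (by exact_mod_cast hlog) (EReal.coe_ne_top _)]
  exact hx.le

lemma tendsto_mul_log_add_mul_rpow_atTop (K : ℝ) {ε δ : ℝ} (hε : 0 < ε) (hδ : 0 < δ) :
    Tendsto (fun y ↦ K * Real.log y + ε * y ^ δ) atTop atTop := by
  have hratio : Tendsto (fun y ↦ K * (Real.log y / y ^ δ) + ε) atTop (𝓝 ε) := by
    simpa using ((isLittleO_log_rpow_atTop hδ).tendsto_div_nhds_zero.const_mul K).add_const ε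
  refine (hratio.pos_mul_atTop hε (tendsto_rpow_atTop hδ)).congr' ?_
  filter_upwards [eventually_gt_atTop 0] with y hy
  have := (Real.rpow_pos_of_pos hy δ).ne'
  field_simp

lemma tendsto_add_mul_abs_rpow_nhds_top {K : ℝ}
    (hf : ∀ᶠ x in cocompact ℝ, ((K * Real.log |x| : ℝ) : EReal) ≤ f x) {ε δ : ℝ} (hε : 0 < ε)
    (hδ : 0 < δ) :
    Tendsto (fun x ↦ f x + ((ε * |x| ^ δ : ℝ) : EReal)) (cocompact ℝ) (𝓝 ⊤) := by
  refine tendsto_nhds_top_mono (EReal.tendsto_coe_nhds_top_iff.2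
    ((tendsto_mul_log_add_mul_rpow_atTop K hε hδ).comp tendsto_norm_cocompact_atTop)) ?_
  filter_upwards [hf] with x hx
  exact (EReal.coe_add _ _).trans_le (add_le_add_left hx _)

end Growth

/-- Remark 5.1: with `c₀` the unique zero of `ψ` in `(1,∞)`, if `0 < c < c₀`, `M > 0`
and `r(x) ≤ c|x| + M` for all `x`, then every lower semicontinuous
`(λ,r)`-supermedian function `f : ℝ → (-∞,∞]` with
`liminf_{|x|→∞} f(x)/ln|x| > -∞` is constant. -/
theorem stmt19 (c₀ c M : ℝ) (hc₀1 : 1 < c₀) (hc₀ : psi c₀ = 0)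
    (hc0 : 0 < c) (hc : c < c₀) (hM : 0 < M)
    (r : ℝ → ℝ) (hr_pos : ∀ x, 0 < r x) (hr : ∀ x : ℝ, r x ≤ c * |x| + M)
    (f : ℝ → EReal) (hf_lsc : LowerSemicontinuous f) (hf_bot : ∀ x, f x ≠ ⊥)
    (hf_liminf : ⊥ < Filter.liminf
      (fun x : ℝ => f x / ((Real.log |x| : ℝ) : EReal))
      (Filter.comap (fun x : ℝ => |x|) Filter.atTop))
    (hf_med : ∀ x : ℝ, intervalMeanE f x (r x) ≤ f x) :
    ∃ C : EReal, ∀ x, f x = C := by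
  have hmed : IsSupermedian r f := hf_med
  obtain ⟨b, hcb, hb⟩ := exists_between hc
  obtain ⟨δ, hδ, hmean⟩ := exists_intervalAverage_abs_rpow_lt hc₀1 hc₀ hb
  obtain ⟨K, hK⟩ := exists_eventually_mul_log_le hf_liminf
  have hbc : 0 < b - c := sub_pos.2 hcb
  refine hmed.exists_eq_const_of_lyapunov hf_lsc hr_pos hf_bot
    (isCompact_closedBall 0 (M / (b - c))) (continuous_abs_rpow hδ.le)
    (fun x ↦ Real.rpow_nonneg (abs_nonneg x) δ) (fun x hx ↦ ?_)
    (fun ε hε ↦ tendsto_add_mul_abs_rpow_nhds_top hK hε hδ)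
  have hx : M / (b - c) < |x| := by simpa using hx
  have hrx : r x ≤ b * |x| := by linarith [hr x, (div_lt_iff₀ hbc).1 hx]
  exact hmean x (r x) (hr_pos x) hrx
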